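/- There is a group homomorphism ρ : Γ → Γ of the figure-8 knot group with ρ(g) = g⁻¹·h·g and ρ(h) = h·g⁻¹·h·g·h⁻¹, and ρ satisfies ρ ∘ ρ = id; in particular ρ is an order-2 automorphism of Γ (the automorphism induced by a strong inversion of the figure-8 knot). -/

import Mathlib

/-- The single relator of the figure-8 knot group, in the free group on two
generators `0 ↦ g`, `1 ↦ h`: the word `h⁻¹·g⁻¹·h·g·h⁻¹·g·h·g⁻¹·h⁻¹·g`. -/
def fig8Rel : FreeGroup (Fin 2) :=
  (FreeGroup.of 1)⁻¹ * (FreeGroup.of 0)⁻¹ * FreeGroup.of 1 * FreeGroup.of 0 *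
    (FreeGroup.of 1)⁻¹ * FreeGroup.of 0 * FreeGroup.of 1 * (FreeGroup.of 0)⁻¹ *
    (FreeGroup.of 1)⁻¹ * FreeGroup.of 0

/-- The figure-8 knot group, presented with two generators and one relation. -/
abbrev Fig8Group : Type := PresentedGroup ({fig8Rel} : Set (FreeGroup (Fin 2)))

/-- The first generator `g` of the figure-8 knot group. -/
def fig8g : Fig8Group := PresentedGroup.of 0

/-- The second generator `h` of the figure-8 knot group. -/
def fig8h : Fig8Group := PresentedGroup.of 1


theorem fig8_aux {G : Type*} [Group G] (g h : G)
    (r : h⁻¹ * g⁻¹ * h * g * h⁻¹ * g * h * g⁻¹ * h⁻¹ * g = 1) :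
    (g⁻¹ * h * g)⁻¹ * (h * g⁻¹ * h * g * h⁻¹) * (g⁻¹ * h * g) = g := by
  have e : (g⁻¹ * h * g)⁻¹ * (h * g⁻¹ * h * g * h⁻¹) * (g⁻¹ * h * g) =
      (g⁻¹ * h⁻¹ * g * h) *
      (h⁻¹ * g⁻¹ * h * g * h⁻¹ * g * h * g⁻¹ * h⁻¹ * g)⁻¹ * (g⁻¹ * h⁻¹ * g * h)⁻¹ * g := by
    group
  rw [e, r]; group

theorem fig8_aux2 {G : Type*} [Group G] (g h : G)
    (r : h⁻¹ * g⁻¹ * h * g * h⁻¹ * g * h * g⁻¹ * h⁻¹ * g = 1) :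
    (h * g⁻¹ * h * g * h⁻¹) * g * (h * g⁻¹ * h * g * h⁻¹)⁻¹ = h := by
  have e : (h * g⁻¹ * h * g * h⁻¹) * g * (h * g⁻¹ * h * g * h⁻¹)⁻¹ =
      h * (h * (h⁻¹ * g⁻¹ * h * g * h⁻¹ * g * h * g⁻¹ * h⁻¹ * g) * h⁻¹) := by
    group
  rw [e, r]; group

theorem fig8_aux3 {G : Type*} [Group G] (g h a b : G)
    (r : h⁻¹ * g⁻¹ * h * g * h⁻¹ * g * h * g⁻¹ * h⁻¹ * g = 1)
    (ha : a = g⁻¹ * h * g) (hb : b = h * g⁻¹ * h * g * h⁻¹) :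
    b⁻¹ * a⁻¹ * b * a * b⁻¹ * a * b * a⁻¹ * b⁻¹ * a = 1 := by
  have h1 := fig8_aux g h r
  rw [← ha, ← hb] at h1
  have hb' : b = a * g * a⁻¹ := by rw [← h1]; group
  have K : g⁻¹ * a⁻¹ * g * a * g⁻¹ * a * g * a⁻¹ * g⁻¹ * a = 1 := by
    have e : g⁻¹ * a⁻¹ * g * a * g⁻¹ * a * g * a⁻¹ * g⁻¹ * a =
      g⁻¹ * (g⁻¹ * h⁻¹ * g * h) *
      (h⁻¹ * g⁻¹ * h * g * h⁻¹ * g * h * g⁻¹ * h⁻¹ * g)⁻¹ *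
      (g⁻¹ * h⁻¹ * g * h)⁻¹ * g := by
      rw [ha]; group
    rw [e, r]; group
  have e : b⁻¹ * a⁻¹ * b * a * b⁻¹ * a * b * a⁻¹ * b⁻¹ * a =
      a * (g⁻¹ * a⁻¹ * g * a * g⁻¹ * a * g * a⁻¹ * g⁻¹ * a) * a⁻¹ := by
    rw [hb']; group
  rw [e, K]; group

theorem fig8_rel : fig8h⁻¹ * fig8g⁻¹ * fig8h * fig8g * fig8h⁻¹ * fig8g * fig8h * fig8g⁻¹ *
    fig8h⁻¹ * fig8g = 1 :=
  PresentedGroup.one_of_mem (rels := {fig8Rel}) (x := fig8Rel) rfl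

/-- The order-2 automorphism of the figure-8 knot group induced by the strong
inversion: `ρ(g) = g⁻¹·h·g`, `ρ(h) = h·g⁻¹·h·g·h⁻¹`, with `ρ ∘ ρ = id`. -/
theorem fig8_strong_inversion_automorphism :
    ∃ ρ : Fig8Group →* Fig8Group,
      ρ fig8g = fig8g⁻¹ * fig8h * fig8g ∧
      ρ fig8h = fig8h * fig8g⁻¹ * fig8h * fig8g * fig8h⁻¹ ∧
      ρ.comp ρ = MonoidHom.id Fig8Group := by
  let f : Fin 2 → Fig8Group :=
    ![fig8g⁻¹ * fig8h * fig8g, fig8h * fig8g⁻¹ * fig8h * fig8g * fig8h⁻¹]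
  have hf : ∀ r ∈ ({fig8Rel} : Set (FreeGroup (Fin 2))), FreeGroup.lift f r = 1 := by
    intro r hr
    rw [Set.mem_singleton_iff.1 hr]
    simp only [fig8Rel, map_mul, map_inv, FreeGroup.lift_apply_of]
    exact fig8_aux3 fig8g fig8h (f 0) (f 1) fig8_rel rfl rfl
  let ρ : Fig8Group →* Fig8Group := PresentedGroup.toGroup hf
  have hg : ρ fig8g = fig8g⁻¹ * fig8h * fig8g := PresentedGroup.toGroup.of hf
  have hh : ρ fig8h = fig8h * fig8g⁻¹ * fig8h * fig8g * fig8h⁻¹ := PresentedGroup.toGroup.of hf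
  have hgg : ρ (ρ fig8g) = fig8g := by
    conv_lhs => rw [hg]
    simp only [map_mul, map_inv]
    rw [hg, hh]
    exact fig8_aux _ _ fig8_rel
  have hhh : ρ (ρ fig8h) = fig8h := by
    have e : fig8h * fig8g⁻¹ * fig8h * fig8g * fig8h⁻¹ =
      fig8h * (fig8g⁻¹ * fig8h * fig8g) * fig8h⁻¹ := by group
    conv_lhs => rw [hh, e, ← hg]
    rw [map_mul, map_mul, map_inv, hgg, hh]
    exact fig8_aux2 _ _ fig8_rel
  refine ⟨ρ, hg, hh, ?_⟩
  apply PresentedGroup.ext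
  intro x
  fin_cases x
  · exact hgg
  · exact hhh
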